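/- arXiv:2505.07756 — 2 statements merged into one kernel-verified Lean document; each statement's English description precedes it below -/
import Mathlib

section
/- Let n ≥ 8 and let 𝒻 be a family of 3-element subsets of [n]. Suppose x ∈ [n] satisfies |𝒻(x)| ≥ n − 1, and suppose there exists F_i ∈ 𝒻 with x ∈ F_i such that G ∩ F_i ≠ {x} for every G ∈ 𝒻 (i.e., {x} is a witness of F_i). Then the number of elements y ∈ [n] such that the pair {x, y} is a witness of some member of 𝒻 (i.e., there exists F_j ∈ 𝒻 with {x, y} ⊆ F_j and G ∩ F_j ≠ {x, y} for every G ∈ 𝒻) is at most n − 4. -/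
/-!
Let `{x}` be a witness of `{x, a, b} ∈ 𝒻`. In the link graph of `x`, whose edges are the pairs
`F \ {x}` for `F ∈ 𝒻` through `x`, every edge then meets the edge `ab`, so the number of edges is
`deg a + deg b - 1`, which is at most `n - 2` plus the number of common neighbours of `a` and `b`.
Since there are at least `n - 1` edges, `a` and `b` have a common neighbour `c`. A pair `{x, y}` is
a witness only if `y` has degree one in the link, so `y` avoids `x` and the triangle `abc`.
The argument works unchanged for the link of a `k`-set in a `(k + 2)`-uniform family.
-/

open Finset

variable {α : Type*} [DecidableEq α] {𝒻 : Finset (Finset α)} {B F V : Finset α} {a b c d : α}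

/-- `B` is a witness of `F` in the family `𝒻`: it is a subset of `F` that is not the trace on `F` of
any member of `𝒻`. For `F ∈ 𝒻` such a `B` is automatically a proper subset, since `F ∩ F = F`. -/
def IsWitness (𝒻 : Finset (Finset α)) (B F : Finset α) : Prop :=
  B ⊆ F ∧ ∀ G ∈ 𝒻, G ∩ F ≠ B

instance : Decidable (IsWitness 𝒻 B F) :=
  inferInstanceAs (Decidable (_ ∧ _))

/-- The elements outside `B` whose addition to `B` gives a member of `𝒻`. When `B = {x, a}` these
are the neighbours of `a` in the link graph of `x`. -/
def completions (𝒻 : Finset (Finset α)) (B : Finset α) : Finset α :=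
  {c ∈ 𝒻.biUnion id \ B | insert c B ∈ 𝒻}

lemma mem_completions : c ∈ completions 𝒻 B ↔ c ∉ B ∧ insert c B ∈ 𝒻 := by
  simp only [completions, mem_filter, mem_sdiff, mem_biUnion, id]
  exact ⟨fun h => ⟨h.1.2, h.2⟩, fun h => ⟨⟨⟨_, h.2, mem_insert_self c B⟩, h.1⟩, h.2⟩⟩

lemma mem_completions_insert_comm (hab : a ≠ b) (ha : a ∉ B) (h : b ∈ completions 𝒻 (insert a B)) :
    a ∈ completions 𝒻 (insert b B) := by
  refine mem_completions.2 ⟨by simp [hab, ha], ?_⟩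
  exact insert_comm b a B ▸ (mem_completions.1 h).2

lemma completions_insert_subset_sdiff (hV : ∀ F ∈ 𝒻, F ⊆ V) :
    completions 𝒻 (insert a B) ⊆ V \ B := by
  intro c hc
  obtain ⟨hcaB, hc𝒻⟩ := mem_completions.1 hc
  exact mem_sdiff.2 ⟨hV _ hc𝒻 (mem_insert_self _ _), fun hcB => hcaB (mem_insert_of_mem hcB)⟩

lemma card_completions (h𝒻 : (𝒻 : Set (Finset α)).Sized (#B + 1)) :
    #(completions 𝒻 B) = #{F ∈ 𝒻 | B ⊆ F} := by
  refine card_nbij (insert · B) (fun c hc => ?_) (fun c hc d _ hcd => ?_) (fun F hF => ?_)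
  · exact mem_filter.2 ⟨(mem_completions.1 hc).2, subset_insert c B⟩
  · exact (insert_inj (mem_completions.1 hc).1).1 hcd
  · obtain ⟨hF, hBF⟩ := mem_filter.1 hF
    obtain ⟨c, hcB, rfl⟩ := exists_eq_insert_iff.2 ⟨hBF, (h𝒻 hF).symm⟩
    exact ⟨c, mem_completions.2 ⟨hcB, hF⟩, rfl⟩

lemma IsWitness.completions_subset (h : IsWitness 𝒻 B F) : completions 𝒻 B ⊆ F \ B := by
  intro c hc
  obtain ⟨hcB, hc𝒻⟩ := mem_completions.1 hc
  refine mem_sdiff.2 ⟨?_, hcB⟩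
  by_contra hcF
  exact h.2 _ hc𝒻 (by rw [insert_inter_of_notMem hcF, inter_eq_left.2 h.1])

lemma IsWitness.card_completions_le_one (h𝒻 : (𝒻 : Set (Finset α)).Sized (#B + 1)) (hF : F ∈ 𝒻)
    (h : IsWitness 𝒻 B F) : #(completions 𝒻 B) ≤ 1 := by
  calc #(completions 𝒻 B) ≤ #(F \ B) := card_le_card h.completions_subset
    _ = 1 := by rw [card_sdiff_of_subset h.1, h𝒻 hF, Nat.add_sub_cancel_left]

lemma not_isWitness_of_mem_completions (h𝒻 : (𝒻 : Set (Finset α)).Sized (#B + 1)) (hcd : c ≠ d)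
    (hc : c ∈ completions 𝒻 B) (hd : d ∈ completions 𝒻 B) : ¬∃ F ∈ 𝒻, IsWitness 𝒻 B F := by
  rintro ⟨F, hF, h⟩
  exact hcd (card_le_one.1 (h.card_completions_le_one h𝒻 hF) c hc d hd)

lemma sized_card_insert_add_one (h𝒻 : (𝒻 : Set (Finset α)).Sized (#B + 2)) (ha : a ∉ B) :
    (𝒻 : Set (Finset α)).Sized (#(insert a B) + 1) := by
  rwa [card_insert_of_notMem ha]

lemma IsWitness.insert_subset_or_insert_subset (h : IsWitness 𝒻 B (insert a (insert b B)))
    (hF : F ∈ 𝒻) (hBF : B ⊆ F) : insert a B ⊆ F ∨ insert b B ⊆ F := by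
  by_contra! hab
  simp only [insert_subset_iff, hBF, and_true] at hab
  exact h.2 F hF (by
    rw [inter_insert_of_notMem hab.1, inter_insert_of_notMem hab.2, inter_eq_right.2 hBF])

lemma IsWitness.card_filter_subset_add_one_le (h : IsWitness 𝒻 B (insert a (insert b B)))
    (hab𝒻 : insert a (insert b B) ∈ 𝒻) :
    #{F ∈ 𝒻 | B ⊆ F} + 1 ≤ #{F ∈ 𝒻 | insert a B ⊆ F} + #{F ∈ 𝒻 | insert b B ⊆ F} := by
  rw [← card_union_add_card_inter]
  refine Nat.add_le_add (card_le_card fun F hF => ?_) (card_pos.2 ⟨insert a (insert b B), ?_⟩)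
  · obtain ⟨hF, hBF⟩ := mem_filter.1 hF
    rw [← filter_or]
    exact mem_filter.2 ⟨hF, h.insert_subset_or_insert_subset hF hBF⟩
  · rw [← filter_and]
    exact mem_filter.2 ⟨hab𝒻, insert_subset_insert a (subset_insert b B), subset_insert a _⟩

lemma IsWitness.exists_mem_completions_inter (hV : ∀ F ∈ 𝒻, F ⊆ V)
    (h𝒻 : (𝒻 : Set (Finset α)).Sized (#B + 2)) (ha : a ∉ B) (hb : b ∉ B)
    (hab𝒻 : insert a (insert b B) ∈ 𝒻) (h : IsWitness 𝒻 B (insert a (insert b B)))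
    (hdeg : #(V \ B) ≤ #{F ∈ 𝒻 | B ⊆ F}) :
    ∃ c, c ∈ completions 𝒻 (insert a B) ∧ c ∈ completions 𝒻 (insert b B) := by
  have hunion : #(completions 𝒻 (insert a B) ∪ completions 𝒻 (insert b B)) ≤ #(V \ B) :=
    card_le_card <| union_subset (completions_insert_subset_sdiff hV)
      (completions_insert_subset_sdiff hV)
  have hsum := h.card_filter_subset_add_one_le hab𝒻
  rw [← card_completions (sized_card_insert_add_one h𝒻 ha),
    ← card_completions (sized_card_insert_add_one h𝒻 hb), ← card_union_add_card_inter] at hsum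
  obtain ⟨c, hc⟩ : (completions 𝒻 (insert a B) ∩ completions 𝒻 (insert b B)).Nonempty :=
    card_pos.1 (by omega)
  exact ⟨c, mem_inter.1 hc⟩

lemma IsWitness.exists_triangle (hV : ∀ F ∈ 𝒻, F ⊆ V)
    (h𝒻 : (𝒻 : Set (Finset α)).Sized (#B + 2)) (hF : F ∈ 𝒻) (h : IsWitness 𝒻 B F)
    (hdeg : #(V \ B) ≤ #{F ∈ 𝒻 | B ⊆ F}) :
    ∃ a b c, a ∉ B ∧ b ∉ B ∧ c ∉ B ∧ a ≠ b ∧ a ≠ c ∧ b ≠ c ∧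
      b ∈ completions 𝒻 (insert a B) ∧ c ∈ completions 𝒻 (insert a B) ∧
      c ∈ completions 𝒻 (insert b B) := by
  obtain ⟨a, b, hab, hFB⟩ := card_eq_two.1 <|
    show #(F \ B) = 2 by rw [card_sdiff_of_subset h.1, h𝒻 hF, Nat.add_sub_cancel_left]
  have haB : a ∉ B := (mem_sdiff.1 (hFB ▸ mem_insert_self a {b})).2
  have hbB : b ∉ B := (mem_sdiff.1 (hFB ▸ mem_insert_of_mem (mem_singleton_self b))).2
  obtain rfl : F = insert a (insert b B) := by
    rw [← sdiff_union_of_subset h.1, hFB, insert_union, singleton_union]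
  obtain ⟨c, hca, hcb⟩ := h.exists_mem_completions_inter hV h𝒻 haB hbB hF hdeg
  have hba : b ∈ completions 𝒻 (insert a B) :=
    mem_completions.2 ⟨by simp [hab.symm, hbB], insert_comm a b B ▸ hF⟩
  obtain ⟨hac, hcB⟩ := not_or.1 (mem_insert.not.1 (mem_completions.1 hca).1)
  obtain ⟨hbc, -⟩ := not_or.1 (mem_insert.not.1 (mem_completions.1 hcb).1)
  exact ⟨a, b, c, haB, hbB, hcB, hab, Ne.symm hac, Ne.symm hbc, hba, hca, hcb⟩

lemma IsWitness.exists_three_not_isWitness_insert (hV : ∀ F ∈ 𝒻, F ⊆ V)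
    (h𝒻 : (𝒻 : Set (Finset α)).Sized (#B + 2)) (hF : F ∈ 𝒻) (h : IsWitness 𝒻 B F)
    (hdeg : #(V \ B) ≤ #{F ∈ 𝒻 | B ⊆ F}) :
    ∃ T ⊆ V \ B, #T = 3 ∧ ∀ y ∈ T, ¬∃ F ∈ 𝒻, IsWitness 𝒻 (insert y B) F := by
  obtain ⟨a, b, c, ha, hb, hc, hab, hac, hbc, hba, hca, hcb⟩ := h.exists_triangle hV h𝒻 hF hdeg
  have hab' := mem_completions_insert_comm hab ha hba
  have hac' := mem_completions_insert_comm hac ha hca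
  have hbc' := mem_completions_insert_comm hbc hb hcb
  have hsized {y : α} (hy : y ∉ B) := sized_card_insert_add_one h𝒻 hy
  refine ⟨{a, b, c}, ?_, card_eq_three.2 ⟨a, b, c, hab, hac, hbc, rfl⟩, ?_⟩
  · simp only [insert_subset_iff, singleton_subset_iff]
    exact ⟨completions_insert_subset_sdiff hV hab', completions_insert_subset_sdiff hV hba,
      completions_insert_subset_sdiff hV hca⟩
  · simp only [mem_insert, mem_singleton, forall_eq_or_imp, forall_eq]
    exact ⟨not_isWitness_of_mem_completions (hsized ha) hbc hba hca,
      not_isWitness_of_mem_completions (hsized hb) hac hab' hcb,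
      not_isWitness_of_mem_completions (hsized hc) hab hac' hbc'⟩

theorem stmt_8_general (hV : ∀ F ∈ 𝒻, F ⊆ V) (h𝒻 : (𝒻 : Set (Finset α)).Sized (#B + 2))
    (hdeg : #(V \ B) ≤ #{F ∈ 𝒻 | B ⊆ F}) (hwit : ∃ F ∈ 𝒻, IsWitness 𝒻 B F) :
    #{y ∈ V | y ∉ B ∧ ∃ F ∈ 𝒻, IsWitness 𝒻 (insert y B) F} + 3 ≤ #(V \ B) := by
  obtain ⟨F, hF, h⟩ := hwit
  obtain ⟨T, hT, hTcard, hTnot⟩ :=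
    h.exists_three_not_isWitness_insert hV h𝒻 hF hdeg
  have hdisj : Disjoint {y ∈ V | y ∉ B ∧ ∃ F ∈ 𝒻, IsWitness 𝒻 (insert y B) F} T :=
    disjoint_left.2 fun y hy hyT => hTnot y hyT (mem_filter.1 hy).2.2
  rw [← hTcard, ← card_union_of_disjoint hdisj]
  refine card_le_card (union_subset (fun y hy => ?_) hT)
  exact mem_sdiff.2 ⟨(mem_filter.1 hy).1, (mem_filter.1 hy).2.1⟩

/-- If `x` lies in at least `n-1` members of `𝒻` and the singleton `{x}` is a witness of
some member of `𝒻`, then at most `n - 4` elements `y` are such that the pair `{x, y}`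
is a witness of some member of `𝒻`. -/
theorem stmt_8 (n : ℕ) (hn : 8 ≤ n) (𝒻 : Finset (Finset ℕ))
    (hsub : ∀ F ∈ 𝒻, F ⊆ Finset.Icc 1 n) (hcard : ∀ F ∈ 𝒻, F.card = 3)
    (x : ℕ) (hx : x ∈ Finset.Icc 1 n)
    (hdeg : n - 1 ≤ (𝒻.filter (fun F => x ∈ F)).card)
    (hwit : ∃ Fi ∈ 𝒻, x ∈ Fi ∧ ∀ G ∈ 𝒻, G ∩ Fi ≠ {x}) :
    ((Finset.Icc 1 n).filter (fun y => y ≠ x ∧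
        ∃ Fj ∈ 𝒻, {x, y} ⊆ Fj ∧ ∀ G ∈ 𝒻, G ∩ Fj ≠ ({x, y} : Finset ℕ))).card
      ≤ n - 4 := by
  have h := stmt_8_general (V := Icc 1 n) (B := {x}) hsub hcard
    (by simpa [sdiff_singleton_eq_erase, hx] using hdeg) (by simpa [IsWitness] using hwit)
  simpa [IsWitness, pair_comm _ x, sdiff_singleton_eq_erase, hx, Nat.sub_sub] using
    Nat.le_sub_of_add_le h
end

section
/- Let n ≥ 8 and let 𝒻 be a family of 3-element subsets of [n] such that |𝒻(v)| ≥ n − 1 for every v ∈ [n]. Then there do not exist six distinct elements a, b, c, x, y, z ∈ [n] such that {a, x, b}, {b, z, c}, {a, y, c} ∈ 𝒻 and each of these three sets intersects every member of 𝒻. (In other words, the subfamily of members of 𝒻 that are transversals of 𝒻 contains no linear triangle.) -/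
/-!
Let `v` be a vertex outside a linear triangle whose three edges are transversals of `𝒻`. Deleting
`v` from a member of `𝒻` through `v` leaves at most two vertices, which must still meet all three
edges of the triangle. They include a corner, as otherwise all three midpoints would be needed, and
the second vertex then lies on the edge opposite that corner. This leaves six pairs, so `v` has
degree at most `6`, whereas every vertex has degree at least `n - 1 ≥ 7`.
-/

open Finset

section LinearTriangle

variable {α : Type*} [DecidableEq α]

/-- `T` is a transversal of the family `𝒻`: it intersects every member of `𝒻`. -/
def IsTransversal (T : Finset α) (𝒻 : Finset (Finset α)) : Prop :=
  ∀ F ∈ 𝒻, (T ∩ F).Nonempty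

/-- The edges of the linear triangle with corners `a`, `b`, `c` and midpoints `x` of `ab`, `y` of
`ac` and `z` of `bc`. Distinctness of the six vertices is not part of the definition. -/
def linearTriangle (a b c x y z : α) : Finset (Finset α) :=
  {{a, x, b}, {b, z, c}, {a, y, c}}

/-- The pairs that meet every edge of `linearTriangle a b c x y z`: two corners, or a corner and the
midpoint of the opposite edge. -/
def linearTriangleCovers (a b c x y z : α) : Finset (Finset α) :=
  {{a, b}, {b, c}, {a, c}, {a, z}, {b, y}, {c, x}}

variable {𝒻 𝒯 C : Finset (Finset α)} {F P T : Finset α} {a b c x y z v : α}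

theorem forall_isTransversal_comm :
    (∀ T ∈ 𝒯, IsTransversal T 𝒻) ↔ ∀ F ∈ 𝒻, IsTransversal F 𝒯 :=
  ⟨fun h F hF T hT => inter_comm T F ▸ h T hT F hF,
    fun h T hT F hF => inter_comm F T ▸ h F hF T hT⟩

theorem IsTransversal.erase (hF : IsTransversal F 𝒯) (hv : ∀ T ∈ 𝒯, v ∉ T) :
    IsTransversal (F.erase v) 𝒯 := by
  intro T hT
  rw [erase_inter, erase_eq_of_notMem fun h => hv T hT (mem_of_mem_inter_right h)]
  exact hF T hT

theorem exists_mem_eq_pair_of_card_le_two (hP : P.card ≤ 2) (ha : a ∈ P) (haT : a ∉ T)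
    (hPT : (P ∩ T).Nonempty) : ∃ u ∈ T, P = {a, u} := by
  obtain ⟨u, hu⟩ := hPT
  obtain ⟨huP, huT⟩ := mem_inter.1 hu
  have hau : a ≠ u := fun h => haT (h ▸ huT)
  refine ⟨u, huT, (eq_of_subset_of_card_le (by simp [insert_subset_iff, ha, huP]) ?_).symm⟩
  rwa [card_pair hau]

theorem nodup_of_card_eq_six (h : ({a, b, c, x, y, z} : Finset α).card = 6) :
    [a, b, c, x, y, z].Nodup := by
  rw [← Multiset.coe_nodup, ← Multiset.toFinset_card_eq_card_iff_nodup]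
  simpa using h

theorem IsTransversal.mem_linearTriangleCovers (h : ({a, b, c, x, y, z} : Finset α).card = 6)
    (hP : IsTransversal P (linearTriangle a b c x y z)) (hcard : P.card ≤ 2) :
    P ∈ linearTriangleCovers a b c x y z := by
  have hne := nodup_of_card_eq_six h
  simp only [List.nodup_cons, List.mem_cons, List.not_mem_nil, not_or] at hne
  have hab : (P ∩ {a, x, b}).Nonempty := hP _ (by simp [linearTriangle])
  have hbc : (P ∩ {b, z, c}).Nonempty := hP _ (by simp [linearTriangle])
  have hac : (P ∩ {a, y, c}).Nonempty := hP _ (by simp [linearTriangle])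
  by_cases ha : a ∈ P
  · obtain ⟨u, hu, rfl⟩ := exists_mem_eq_pair_of_card_le_two hcard ha (by grind) hbc
    grind [linearTriangleCovers]
  by_cases hb : b ∈ P
  · obtain ⟨u, hu, rfl⟩ := exists_mem_eq_pair_of_card_le_two hcard hb (by grind) hac
    grind [linearTriangleCovers]
  by_cases hc : c ∈ P
  · obtain ⟨u, hu, rfl⟩ := exists_mem_eq_pair_of_card_le_two hcard hc (by grind) hab
    grind [linearTriangleCovers]
  have hxyz : {x, y, z} ⊆ P := by grind [Finset.Nonempty]
  have hthree : ({x, y, z} : Finset α).card = 3 :=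
    card_eq_three.2 ⟨x, y, z, by grind, by grind, by grind, rfl⟩
  have hle : ({x, y, z} : Finset α).card ≤ P.card := card_le_card hxyz
  omega

theorem card_linearTriangleCovers_le_six : (linearTriangleCovers a b c x y z).card ≤ 6 :=
  card_le_six

theorem card_filter_mem_le_of_erase_mem (h : ∀ F ∈ 𝒻, v ∈ F → F.erase v ∈ C) :
    (𝒻.filter (v ∈ ·)).card ≤ C.card :=
  card_le_card_of_injOn (·.erase v)
    (fun F hF => h F (mem_filter.1 hF).1 (mem_filter.1 hF).2)
    ((erase_injOn' v).mono fun _ hF => (mem_filter.1 hF).2)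

theorem card_filter_mem_le_six_of_linearTriangle (h : ({a, b, c, x, y, z} : Finset α).card = 6)
    (hcard : ∀ F ∈ 𝒻, F.card ≤ 3) (hv : v ∉ ({a, b, c, x, y, z} : Finset α))
    (htrans : ∀ T ∈ linearTriangle a b c x y z, IsTransversal T 𝒻) :
    (𝒻.filter (v ∈ ·)).card ≤ 6 := by
  have hvT : ∀ T ∈ linearTriangle a b c x y z, v ∉ T := by grind [linearTriangle]
  refine (card_filter_mem_le_of_erase_mem (C := linearTriangleCovers a b c x y z)
    fun F hF hvF => ?_).trans card_linearTriangleCovers_le_six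
  have hF_trans : IsTransversal F (linearTriangle a b c x y z) :=
    forall_isTransversal_comm.1 htrans F hF
  have hcard_erase : (F.erase v).card ≤ 2 := by
    rw [card_erase_of_mem hvF]
    exact Nat.sub_le_of_le_add (hcard F hF)
  exact (hF_trans.erase hvT).mem_linearTriangleCovers h hcard_erase

theorem stmt_16_general {V : Finset α} (hV : 7 ≤ V.card) (hcard : ∀ F ∈ 𝒻, F.card ≤ 3)
    (hdeg : ∀ v ∈ V, 7 ≤ (𝒻.filter (v ∈ ·)).card)
    (h : ({a, b, c, x, y, z} : Finset α).card = 6) :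
    ¬ ∀ T ∈ linearTriangle a b c x y z, IsTransversal T 𝒻 := by
  intro htrans
  obtain ⟨v, hvV, hv⟩ : ∃ v ∈ V, v ∉ ({a, b, c, x, y, z} : Finset α) :=
    exists_mem_notMem_of_card_lt_card (by omega)
  exact (card_filter_mem_le_six_of_linearTriangle h hcard hv htrans).not_gt (hdeg v hvV)

end LinearTriangle

/-- Suppose every element of `[n]` has degree at least `n - 1` in `𝒻`.  Then there do
not exist six distinct elements `a, b, c, x, y, z ∈ [n]` such that `{a,x,b}`,
`{b,z,c}`, `{a,y,c}` all belong to `𝒻` and each intersects every member of `𝒻`: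
the subfamily of transversal members of `𝒻` contains no linear triangle. -/
theorem stmt_16 (n : ℕ) (hn : 8 ≤ n) (𝒻 : Finset (Finset ℕ))
    (hsub : ∀ F ∈ 𝒻, F ⊆ Finset.Icc 1 n) (hcard : ∀ F ∈ 𝒻, F.card = 3)
    (hdeg : ∀ v ∈ Finset.Icc 1 n, n - 1 ≤ (𝒻.filter (fun F => v ∈ F)).card) :
    ¬ ∃ a b c x y z : ℕ,
        a ∈ Finset.Icc 1 n ∧ b ∈ Finset.Icc 1 n ∧ c ∈ Finset.Icc 1 n ∧
        x ∈ Finset.Icc 1 n ∧ y ∈ Finset.Icc 1 n ∧ z ∈ Finset.Icc 1 n ∧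
        ({a, b, c, x, y, z} : Finset ℕ).card = 6 ∧
        ({a, x, b} : Finset ℕ) ∈ 𝒻 ∧ ({b, z, c} : Finset ℕ) ∈ 𝒻 ∧
        ({a, y, c} : Finset ℕ) ∈ 𝒻 ∧
        (∀ F ∈ 𝒻, (({a, x, b} : Finset ℕ) ∩ F).Nonempty) ∧
        (∀ F ∈ 𝒻, (({b, z, c} : Finset ℕ) ∩ F).Nonempty) ∧
        (∀ F ∈ 𝒻, (({a, y, c} : Finset ℕ) ∩ F).Nonempty) := by
  rintro ⟨a, b, c, x, y, z, -, -, -, -, -, -, h, -, -, -, hab, hbc, hac⟩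
  exact stmt_16_general (by rw [Nat.card_Icc]; omega) (fun F hF => (hcard F hF).le)
    (fun v hv => (Nat.le_sub_one_of_lt hn).trans (hdeg v hv)) h
    (by simpa [linearTriangle, IsTransversal] using ⟨hab, hbc, hac⟩)
end
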